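/- arXiv:0902.4448 — 3 statements merged into one kernel-verified Lean document; each statement's English description precedes it below -/
import Mathlib

section
/- Let n be a positive integer and let P be a finite poset. If P order-embeds into a product of n nontrivial finite trees (with componentwise ordering), then (κ^{+(n-1)},<κ)⤳P holds for every infinite cardinal κ. -/
/-! Each tree `T i` enters only through the height `a ↦ |Iic a|`. Pulled back along `e`, the heights
give monotone maps `r i : P → ℕ` such that, whenever `x, z ≤ y` and `r i z ≤ r i x` for all `i`, one
has `z ≤ x`: the coordinates of `x` and `z` lie in the chains `Iic (e y i)`, so they are comparable,
and the height is strictly monotone.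

It therefore suffices to choose `f` injective such that `f z ∈ F (f '' Iic x)` forces
`r i z ≤ r i x` for every `i`. For all `i` but the last this is achieved by confining each value
`f p` to a cell (`exists_cells`): starting with cells of size `κ^{+m}`, one builds an increasing
sequence `B 0 ⊆ B 1 ⊆ ...` of sets of size less than `κ^{+m}` which are closed under `F` on finite
sets, and replaces the cell `c p` by `c p ∩ (B (r i p + 1) \ B (r i p))`. Closedness gives
`F (f '' Iic x) ⊆ B (r i x + 1)`, whereas `f z ∉ B (r i z)`, hence `r i z ≤ r i x`. Each map costs
one cardinal successor, and after `n - 1` of them the cells still have size at least `κ`. The last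
map is dealt with by choosing the values of `f` in increasing order of `r (n - 1)`
(`exists_choice`): each new value only has to avoid finitely many sets of size `< κ`.
-/

universe u v w

open Cardinal

/-- The relation `(κ,<λ)⤳P`: for every map `F` from the powerset of (a set of size) `κ`
to the subsets of size `< λ`, there is an injective `f : P → κ` such that
`F(f''(P↓x)) ∩ f''(P↓y) ⊆ f''(P↓x)` whenever `x ≤ y` in `P`. -/
def Leadsto (κ lam : Cardinal.{u}) (P : Type v) [PartialOrder P] : Prop :=
  ∀ A : Type u, #A = κ →
    ∀ F : Set A → Set A, (∀ X : Set A, #↥(F X) < lam) →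
      ∃ f : P → A, Function.Injective f ∧
        ∀ x y : P, x ≤ y →
          F (f '' Set.Iic x) ∩ f '' Set.Iic y ⊆ f '' Set.Iic x

/-- The `n`-th cardinal successor `κ⁺ⁿ`. -/
noncomputable def succN (κ : Cardinal.{u}) (n : ℕ) : Cardinal.{u} := Order.succ^[n] κ

theorem mk_biUnion_finset_lt {A : Type u} {P : Type v} {κ : Cardinal.{u}} (hκ : ℵ₀ ≤ κ)
    (s : Finset P) (D : P → Set A) (hD : ∀ p ∈ s, #(D p) < κ) :
    #↥(⋃ p ∈ s, D p) < κ := by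
  classical
  induction s using Finset.induction_on with
  | empty => simpa using lt_of_lt_of_le aleph0_pos hκ
  | insert a s ha ih =>
    rw [Finset.set_biUnion_insert]
    exact (mk_union_le _ _).trans_lt (add_lt_of_lt hκ (hD a (by simp))
      (ih fun p hp => hD p (by simp [hp])))

/-- A set of size `κ` is not covered by a set of size `< κ`. -/
theorem exists_mem_notMem_of_mk_lt {A : Type u} {κ : Cardinal.{u}} {C S : Set A}
    (hC : κ ≤ #C) (hS : #S < κ) : ∃ v ∈ C, v ∉ S := by
  by_contra! h
  exact absurd (hC.trans (mk_le_mk_of_subset h)) hS.not_ge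

/-- `B` is closed under `F` restricted to finite sets. -/
def FinClosed {A : Type u} (F : Set A → Set A) (B : Set A) : Prop :=
  ∀ X : Set A, X.Finite → X ⊆ B → F X ⊆ B

theorem exists_finClosed {A : Type u} {μ : Cardinal.{u}} (hμ : ℵ₀ ≤ μ)
    (F : Set A → Set A) (hF : ∀ X, #(F X) ≤ μ) (B : Set A) (hB : #B ≤ μ) :
    ∃ B' : Set A, B ⊆ B' ∧ #B' ≤ μ ∧ FinClosed F B' := by
  classical
  let g : Set A → Set A := fun B => B ∪ ⋃ X : Finset B, F (Subtype.val '' (X : Set B))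
  have hg : ∀ B : Set A, #B ≤ μ → #(g B) ≤ μ := by
    intro B hB
    refine (mk_union_le _ _).trans (add_le_of_le hμ hB ?_)
    refine (mk_iUnion_le _).trans ?_
    have h1 : #(Finset B) ≤ μ := by
      rcases finite_or_infinite B with h | h
      · exact (lt_aleph0_of_finite _).le.trans hμ
      · rwa [mk_finset_of_infinite]
    exact (mul_le_mul' h1 (ciSup_le' fun X => hF _)).trans (mul_eq_self hμ).le
  have hsub : ∀ B, B ⊆ g B := fun B => Set.subset_union_left
  have hn : ∀ n : ℕ, #(g^[n] B) ≤ μ := by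
    intro n
    induction n with
    | zero => exact hB
    | succ n ih => rw [Function.iterate_succ_apply']; exact hg _ ih
  have hmono : Monotone fun n : ℕ => g^[n] B := by
    refine monotone_nat_of_le_succ fun n => ?_
    simp only [Function.iterate_succ_apply']
    exact hsub _
  refine ⟨⋃ n : ℕ, g^[n] B, Set.subset_iUnion (fun n : ℕ => g^[n] B) 0, ?_, ?_⟩
  · have h := mk_iUnion_le_lift (fun n : ℕ => g^[n] B)
    simp only [lift_uzero, mk_nat, lift_aleph0] at h
    exact h.trans ((mul_le_mul' hμ (ciSup_le' hn)).trans (mul_eq_self hμ).le)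
  · intro X hX hXB
    obtain ⟨n, hn⟩ : ∃ n : ℕ, X ⊆ g^[n] B := by
      obtain ⟨n, hn⟩ := Directed.exists_mem_subset_of_finset_subset_biUnion
        (s := hX.toFinset) (f := fun n : ℕ => g^[n] B) hmono.directed_le (by simpa using hXB)
      exact ⟨n, by simpa using hn⟩
    refine subset_trans ?_ (Set.subset_iUnion (fun n : ℕ => g^[n] B) (n + 1))
    simp only [Function.iterate_succ_apply']
    refine subset_trans ?_ Set.subset_union_right
    have hfin : (Subtype.val ⁻¹' X : Set (g^[n] B)).Finite :=
      hX.preimage Subtype.val_injective.injOn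
    refine subset_trans ?_
      (Set.subset_iUnion (fun Y : Finset (g^[n] B) => F (Subtype.val '' (Y : Set (g^[n] B))))
        hfin.toFinset)
    have : Subtype.val '' (hfin.toFinset : Set (g^[n] B)) = X := by
      rw [Set.Finite.coe_toFinset, Subtype.image_preimage_coe]
      exact Set.inter_eq_right.2 hn
    rw [this]

theorem le_succN (κ : Cardinal.{u}) (m : ℕ) : κ ≤ succN κ m := by
  induction m with
  | zero => exact le_rfl
  | succ m ih =>
    rw [succN, Function.iterate_succ_apply']
    exact ih.trans (Order.le_succ _)

/-- Cells of size more than `μ` can be shrunk to size at least `μ` so that every selection `f` from the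
shrunken cells satisfies `f z ∈ F (f '' Iic x) → r z ≤ r x`. -/
theorem exists_cells_step {A : Type u} {P : Type v} [PartialOrder P] [Finite P]
    {μ : Cardinal.{u}} (hμ : ℵ₀ ≤ μ) (F : Set A → Set A) (hF : ∀ X, #(F X) ≤ μ)
    (r : P → ℕ) (hr : Monotone r) (c : P → Set A) (hc : ∀ p, Order.succ μ ≤ #(c p)) :
    ∃ c' : P → Set A, (∀ p, c' p ⊆ c p) ∧ (∀ p, μ ≤ #(c' p)) ∧
      ∀ f : P → A, (∀ p, f p ∈ c' p) → ∀ x z, f z ∈ F (f '' Set.Iic x) → r z ≤ r x := by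
  classical
  have := Fintype.ofFinite P
  have hsucc : ∀ B : Set A, #B ≤ μ → ∃ B' : Set A, #B' ≤ μ ∧ B ⊆ B' ∧ FinClosed F B' ∧
      ∀ p, μ ≤ #↥(c p ∩ (B' \ B)) := by
    intro B hB
    have hD : ∀ p, ∃ D : Set A, D ⊆ c p \ B ∧ #D = μ := by
      intro p
      refine le_mk_iff_exists_subset.1 ?_
      by_contra! h
      have h1 : #(c p) ≤ #↥(c p \ B) + #B :=
        (mk_le_mk_of_subset (by rw [Set.sdiff_union_self]; exact Set.subset_union_left)).trans
          (mk_union_le (c p \ B) B)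
      exact absurd ((hc p).trans (h1.trans (add_le_of_le hμ h.le hB)))
        (Order.lt_succ μ).not_ge
    choose D hDsub hDmk using hD
    have hU : #↥(B ∪ ⋃ p ∈ (Finset.univ : Finset P), D p) ≤ μ := by
      refine (mk_union_le _ _).trans (add_le_of_le hμ hB (Order.lt_succ_iff.1 ?_))
      exact mk_biUnion_finset_lt (hμ.trans (Order.le_succ _)) _ _
        fun p _ => by rw [hDmk]; exact Order.lt_succ μ
    obtain ⟨B', hBB', hB', hcl⟩ := exists_finClosed hμ F hF _ hU
    refine ⟨B', hB', Set.subset_union_left.trans hBB', hcl, fun p => ?_⟩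
    rw [← hDmk p]
    refine mk_le_mk_of_subset fun a ha => ⟨(hDsub p ha).1, hBB' (Or.inr ?_), (hDsub p ha).2⟩
    simp only [Finset.mem_univ, Set.iUnion_true, Set.mem_iUnion]
    exact ⟨p, ha⟩
  choose! S hS1 hS2 hS3 hS4 using hsucc
  have hB : ∀ t : ℕ, #(S^[t] ∅) ≤ μ := by
    intro t
    induction t with
    | zero => simp
    | succ t ih => rw [Function.iterate_succ_apply']; exact hS1 _ ih
  have hmono : Monotone fun t : ℕ => S^[t] (∅ : Set A) := by
    refine monotone_nat_of_le_succ fun t => ?_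
    simp only [Function.iterate_succ_apply']
    exact hS2 _ (hB t)
  refine ⟨fun p => c p ∩ (S^[r p + 1] ∅ \ S^[r p] ∅), fun p => Set.inter_subset_left,
    fun p => ?_, fun f hf x z hz => ?_⟩
  · simp only [Function.iterate_succ_apply']
    exact hS4 _ (hB _) p
  · have hcl : FinClosed F (S^[r x + 1] (∅ : Set A)) := by
      rw [Function.iterate_succ_apply']
      exact hS3 _ (hB _)
    have hzB : f z ∈ S^[r x + 1] (∅ : Set A) := by
      refine hcl _ (Set.toFinite _) ?_ hz
      rintro _ ⟨w, hw, rfl⟩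
      exact hmono (Nat.succ_le_succ (hr hw)) (hf w).2.1
    by_contra! hlt
    exact (hf z).2.2 (hmono (Nat.succ_le_of_lt hlt) hzB)

/-- Iterating `exists_cells_step`: `m` monotone maps are controlled at the cost of `m` cardinal
successors. -/
theorem exists_cells {A : Type u} {P : Type v} [PartialOrder P] [Finite P]
    {κ : Cardinal.{u}} (hκ : ℵ₀ ≤ κ) (F : Set A → Set A) (hF : ∀ X, #(F X) < κ)
    (r : ℕ → P → ℕ) (hr : ∀ i, Monotone (r i)) (m : ℕ) (c : P → Set A)
    (hc : ∀ p, succN κ m ≤ #(c p)) :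
    ∃ c' : P → Set A, (∀ p, c' p ⊆ c p) ∧ (∀ p, κ ≤ #(c' p)) ∧
      ∀ f : P → A, (∀ p, f p ∈ c' p) → ∀ x z, f z ∈ F (f '' Set.Iic x) →
        ∀ i < m, r i z ≤ r i x := by
  induction m generalizing c with
  | zero => exact ⟨c, fun _ => subset_rfl, hc, by simp⟩
  | succ m ih =>
    obtain ⟨c₁, h1, h2, h3⟩ := exists_cells_step (hκ.trans (le_succN κ m)) F
      (fun X => (hF X).le.trans (le_succN κ m)) (r m) (hr m) c
      (fun p => by simpa only [succN, Function.iterate_succ_apply'] using hc p)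
    obtain ⟨c₂, h4, h5, h6⟩ := ih c₁ h2
    refine ⟨c₂, fun p => (h4 p).trans (h1 p), h5, fun f hf x z hz i hi => ?_⟩
    rcases Nat.lt_succ_iff_lt_or_eq.1 hi with hi | rfl
    · exact h6 f hf x z hz i hi
    · exact h3 f (fun p => h4 p (hf p)) x z hz

/-- Values can be chosen in cells of size at least `κ`, in increasing order of `r`, so that each
value avoids the sets `F (f '' Iic x)` for all `x` of smaller `r`. -/
theorem exists_choice {A : Type u} {P : Type v} [PartialOrder P] [Finite P]
    {κ : Cardinal.{u}} (hκ : ℵ₀ ≤ κ) (F : Set A → Set A) (hF : ∀ X, #(F X) < κ)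
    (r : P → ℕ) (hr : Monotone r) (c : P → Set A) (hc : ∀ p, κ ≤ #(c p)) :
    ∃ f : P → A, Function.Injective f ∧ (∀ p, f p ∈ c p) ∧
      ∀ x z, f z ∈ F (f '' Set.Iic x) → r z ≤ r x := by
  classical
  have := Fintype.ofFinite P
  suffices h : ∀ s : Finset P, ∃ f : P → A, Set.InjOn f s ∧ (∀ p ∈ s, f p ∈ c p) ∧
      ∀ z ∈ s, ∀ x, r x < r z → f z ∉ F (f '' Set.Iic x) by
    obtain ⟨f, h1, h2, h3⟩ := h Finset.univ
    refine ⟨f, by simpa [Set.injOn_univ] using h1, fun p => h2 p (Finset.mem_univ p),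
      fun x z hz => ?_⟩
    by_contra! hlt
    exact h3 z (Finset.mem_univ z) x hlt hz
  intro s
  induction s using Finset.induction_on_max_value r with
  | empty =>
    have hne : ∀ p, ∃ v, v ∈ c p := fun p => by
      obtain ⟨v, hv, _⟩ := exists_mem_notMem_of_mk_lt (S := ∅) (hc p)
        (by simpa using aleph0_pos.trans_le hκ)
      exact ⟨v, hv⟩
    choose f hf using hne
    exact ⟨f, by simp, by simp, by simp⟩
  | insert a s ha hmax ih =>
    obtain ⟨f, h1, h2, h3⟩ := ih
    have hbad : #↥((⋃ p ∈ s, {f p}) ∪ ⋃ x ∈ (Finset.univ : Finset P), F (f '' Set.Iic x)) < κ :=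
      (mk_union_le _ _).trans_lt (add_lt_of_lt hκ
        (mk_biUnion_finset_lt hκ _ _ fun p _ => by
          simpa using one_lt_aleph0.trans_le hκ)
        (mk_biUnion_finset_lt hκ _ _ fun p _ => hF _))
    obtain ⟨v, hvc, hv⟩ := exists_mem_notMem_of_mk_lt (hc a) hbad
    simp only [Set.mem_union, Set.mem_iUnion, Set.mem_singleton_iff, not_or, not_exists,
      Finset.mem_univ, true_imp_iff] at hv
    obtain ⟨hv1, hv2⟩ := hv
    have hne : ∀ p ∈ s, p ≠ a := fun p hp h => ha (h ▸ hp)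
    -- Below an `x` with `r x < r a` the new value at `a` is invisible.
    have himg : ∀ x, r x < r a → Function.update f a v '' Set.Iic x = f '' Set.Iic x := by
      intro x hx
      refine Set.image_congr fun w hw => Function.update_of_ne ?_ _ _
      rintro rfl
      exact absurd (hr hw) hx.not_ge
    refine ⟨Function.update f a v, ?_, ?_, ?_⟩
    · rw [Finset.coe_insert, Set.injOn_insert (by simpa using ha)]
      have hs : Set.EqOn (Function.update f a v) f s :=
        fun p hp => Function.update_of_ne (hne p hp) _ _
      refine ⟨h1.congr hs.symm, ?_⟩
      rw [hs.image_eq, Function.update_self]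
      rintro ⟨p, hp, hpv⟩
      exact hv1 p hp hpv.symm
    · intro p hp
      rcases Finset.mem_insert.1 hp with rfl | hp
      · rwa [Function.update_self]
      · rw [Function.update_of_ne (hne p hp)]; exact h2 p hp
    · intro z hz x hxz
      rcases Finset.mem_insert.1 hz with rfl | hz
      · rw [himg x hxz, Function.update_self]
        exact hv2 x
      · rw [himg x (hxz.trans_le (hmax z hz)), Function.update_of_ne (hne z hz)]
        exact h3 z hz x hxz

/-- In a finite tree, elements with a common upper bound are compared by their heights. -/
theorem le_of_ncard_Iic_le {T : Type w} [PartialOrder T] [Finite T] {x y z : T}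
    (hy : IsChain (· ≤ ·) (Set.Iic y)) (hx : x ≤ y) (hz : z ≤ y)
    (h : (Set.Iic z).ncard ≤ (Set.Iic x).ncard) : z ≤ x := by
  rcases hy.total hz hx with hzx | hxz
  · exact hzx
  · rcases hxz.eq_or_lt with rfl | hlt
    · exact le_rfl
    · exact absurd (Set.ncard_lt_ncard (Set.Iic_ssubset_Iic.2 hlt) (Set.toFinite _)) h.not_gt

/-- If a finite poset `P` order-embeds into a product of `n` nontrivial finite trees,
then `(κ^{+(n-1)},<κ)⤳P` holds for every infinite cardinal `κ`. -/
theorem stmt8 (n : ℕ) (hn : 0 < n) (P : Type v) [PartialOrder P] [Finite P]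
    (T : Fin n → Type w) [∀ i, PartialOrder (T i)] [∀ i, Finite (T i)]
    [∀ i, OrderBot (T i)] [∀ i, Nontrivial (T i)]
    (htree : ∀ i, ∀ a : T i, IsChain (· ≤ ·) (Set.Iic a))
    (e : P ↪o ∀ i, T i) :
    ∀ κ : Cardinal.{u}, ℵ₀ ≤ κ → Leadsto (succN κ (n - 1)) κ P := by
  intro κ hκ A hA F hF
  classical
  let r : ℕ → P → ℕ := fun i p => if h : i < n then (Set.Iic (e p ⟨i, h⟩)).ncard else 0
  have hr : ∀ i, Monotone (r i) := by
    intro i x y hxy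
    by_cases h : i < n
    · simp only [r, h, dif_pos]
      exact Set.ncard_le_ncard (Set.Iic_subset_Iic.2 (e.monotone hxy ⟨i, h⟩)) (Set.toFinite _)
    · simp [r, h]
  obtain ⟨c, -, hc, hcF⟩ := exists_cells hκ F hF r hr (n - 1) (fun _ => Set.univ)
    (fun _ => by rw [mk_univ, hA])
  obtain ⟨f, hinj, hfc, hf⟩ := exists_choice hκ F hF (r (n - 1)) (hr _) c hc
  refine ⟨f, hinj, ?_⟩
  rintro x y hxy _ ⟨hzF, z, hz, rfl⟩
  refine ⟨z, e.le_iff_le.1 fun i => ?_, rfl⟩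
  have hi : r i z ≤ r i x := by
    rcases Nat.lt_or_ge i (n - 1) with h | h
    · exact hcF f hfc x z hzF i h
    · have : (i : ℕ) = n - 1 := by omega
      rw [this]; exact hf x z hzF
  simp only [r, i.2, dif_pos] at hi
  exact le_of_ncard_Iic_le (htree i (e y i)) (e.monotone hxy i) (e.monotone hz i) hi
end

section
/- Let P be a finite poset with a least element such that P↓a is a join-semilattice for each a ∈ P, and suppose that for some a ∈ P the breadth of the join-semilattice P↓a equals n, where n ≥ 2. Then for every infinite cardinal λ, the relation (λ^{+(n-2)},<λ)⤳P fails. -/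
/-! The negative half of Kuratowski's free set theorem gives, on a set `A` of size `λ⁺⁽ⁿ⁻²⁾`, a map
`G` from finite subsets of `A` to subsets of size `< λ` such that every `n`-element set `U` has an
element `x` lying in `G V` for some `V ⊆ U` omitting `x` (`exists_no_free_set`): by induction on
`n`, well-order the set so that
proper initial segments have smaller cardinality, and let `G` on a set with maximum `x` be the map
obtained for the segment below `x`, evaluated at the remaining elements.

Since `P↓a` has breadth exactly `n`, it contains an `n`-element set `Y` none of whose elements `y`
lies below the join `b y` of the others (`exists_irredundant`). Let `F X`, for finite `X`, be
the union of `G Z` over all `Z ⊆ X`. If `f : P → A` witnessed the arrow relation for `F`, then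
comparing `b y ≤ a` shows that `f y ∉ G V` for every `y ∈ Y` and every subset `V` of `f '' Y`
omitting `f y`, so `f '' Y` would be an `n`-element free set for `G`.
-/

universe u v w

open Cardinal

/-- `S` is a join-semilattice: every pair of elements has a least upper bound. -/
def IsJoinSemilat (S : Type v) [PartialOrder S] : Prop :=
  ∀ x y : S, ∃ z : S, IsLUB {x, y} z

/-- The poset `S` has breadth at most `n`: every nonempty finite subset `X` contains a
nonempty subset `Y` of at most `n` elements with the same least upper bounds (`⋁X = ⋁Y`). -/
def BreadthLE (S : Type v) [PartialOrder S] (n : ℕ) : Prop :=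
  ∀ X : Finset S, X.Nonempty →
    ∃ Y : Finset S, Y ⊆ X ∧ Y.Nonempty ∧ Y.card ≤ n ∧
      ∀ s : S, IsLUB (↑X : Set S) s ↔ IsLUB (↑Y : Set S) s

/-- Kuratowski: a set `S` of cardinality `< λ⁺ᵐ` carries a set mapping of size `< λ` without free
subsets of `m + 1` elements. Working with subsets `S` of a fixed type avoids coercions between
the initial segments in the induction. -/
theorem exists_no_free_set {A : Type u} (lam : Cardinal.{u}) (h0 : 0 < lam) (m : ℕ) :
    ∀ S : Set A, #S < succN lam m →
      ∃ G : Finset A → Set A, (∀ X, #(G X) < lam) ∧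
        ∀ U : Finset A, ↑U ⊆ S → U.card = m + 1 →
          ∃ x ∈ U, ∃ V : Finset A, V ⊆ U ∧ x ∉ V ∧ x ∈ G V := by
  classical
  induction m with
  | zero =>
    intro S hS
    refine ⟨fun _ => S, fun _ => hS, fun U hU hc => ?_⟩
    obtain ⟨x, rfl⟩ := Finset.card_eq_one.1 hc
    exact ⟨x, by simp, ∅, by simp, by simp, hU (by simp)⟩
  | succ m ih =>
    intro S hS
    -- inject `S` into the initial ordinal of `λ⁺ᵐ`, whose proper initial segments are smaller
    have hS' : #S ≤ #(succN lam m).ord.ToType := by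
      rw [mk_ord_toType, ← Order.lt_succ_iff]
      simpa only [succN, Function.iterate_succ_apply'] using hS
    obtain ⟨g⟩ := hS'
    have hseg (x : S) : #{y : A | ∃ h : y ∈ S, g ⟨y, h⟩ < g x} < succN lam m := by
      refine lt_of_le_of_lt ?_ ((mk_Iio_lt (g x) (by simp)).trans_eq (mk_ord_toType _))
      refine mk_le_of_injective
        (f := fun y => (⟨g ⟨y.1, y.2.1⟩, y.2.2⟩ : Set.Iio (g x))) ?_
      intro y z h
      have := g.injective (Subtype.ext_iff.1 h)
      exact Subtype.ext (Subtype.mk.inj this)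
    choose H hH1 hH2 using fun x : S => ih _ (hseg x)
    -- `p Y x`: `x` is the `g`-maximum of `Y ∩ S` (and belongs to `Y`)
    let p (Y : Finset A) (x : S) : Prop :=
      x.1 ∈ Y ∧ ∀ y (h : y ∈ S), y ∈ Y → g ⟨y, h⟩ ≤ g x
    refine ⟨fun Y => if h : ∃ x, p Y x then H h.choose (Y.erase h.choose) else ∅, ?_, ?_⟩
    · intro X
      dsimp only
      split_ifs with h
      · exact hH1 _ _
      · simpa using h0
    · intro U hU hc
      have hne : U.attach.Nonempty := by
        rw [Finset.attach_nonempty_iff, ← Finset.card_pos]; omega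
      obtain ⟨⟨t, ht⟩, -, hmax⟩ :=
        Finset.exists_max_image U.attach (fun x => g ⟨x.1, hU x.2⟩) hne
      have hlt : ∀ y ∈ U.erase t, ∃ h : y ∈ S, g ⟨y, h⟩ < g ⟨t, hU ht⟩ := by
        intro y hy
        obtain ⟨hyt, hyU⟩ := Finset.mem_erase.1 hy
        refine ⟨hU hyU, lt_of_le_of_ne (hmax ⟨y, hyU⟩ (by simp)) fun he => hyt ?_⟩
        exact Subtype.ext_iff.1 (g.injective he)
      obtain ⟨x, hx, V, hVU, hxV, hxG⟩ := hH2 ⟨t, hU ht⟩ (U.erase t) (fun y hy => hlt y hy)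
        (by rw [Finset.card_erase_of_mem ht]; omega)
      have htV : t ∉ V := fun h => by simpa using hVU h
      refine ⟨x, Finset.mem_of_mem_erase hx, insert t V, ?_, ?_, ?_⟩
      · exact Finset.insert_subset ht (hVU.trans (Finset.erase_subset _ _))
      · simp [hxV, Finset.ne_of_mem_erase hx]
      · have hp : p (insert t V) ⟨t, hU ht⟩ := by
          refine ⟨by simp, fun y h hy => ?_⟩
          rcases Finset.mem_insert.1 hy with rfl | hy
          · exact le_rfl
          · exact (hlt y (hVU hy)).2.le
        have hex : ∃ x, p (insert t V) x := ⟨_, hp⟩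
        have hch : hex.choose = ⟨t, hU ht⟩ := by
          have hs := hex.choose_spec
          exact g.injective (le_antisymm (hp.2 _ hex.choose.2 hs.1)
            (hs.2 t (hU ht) (by simp)))
        simp only [dif_pos hex, hch, Finset.erase_insert htV]
        exact hxG

theorem exists_isLUB_finset {S : Type v} [PartialOrder S] (h : IsJoinSemilat S) (X : Finset S)
    (hX : X.Nonempty) : ∃ s, IsLUB (↑X : Set S) s := by
  classical
  induction hX using Finset.Nonempty.cons_induction with
  | singleton a => exact ⟨a, by simp⟩
  | cons a s ha hs ih =>
    obtain ⟨b, hb⟩ := ih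
    obtain ⟨c, hc⟩ := h a b
    refine ⟨c, ?_⟩
    rw [Finset.coe_cons]
    have h1 : upperBounds (insert a (↑s : Set S)) = upperBounds {a, b} := by
      rw [upperBounds_insert, upperBounds_insert, hb.upperBounds_eq, upperBounds_singleton]
    rwa [IsLUB, h1]

/-- A join-semilattice of breadth exactly `n ≥ 2` has an `n`-element subset none of whose elements
is below the join of the others. -/
theorem exists_irredundant {S : Type v} [PartialOrder S] (h : IsJoinSemilat S) {n : ℕ}
    (hn : 2 ≤ n) (h1 : BreadthLE S n) (h2 : ¬ BreadthLE S (n - 1)) :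
    ∃ (Y : Finset S) (b : S → S), Y.card = n ∧
      ∀ y ∈ Y, (∀ z ∈ Y, z ≠ y → z ≤ b y) ∧ ¬ y ≤ b y := by
  classical
  unfold BreadthLE at h2
  push Not at h2
  obtain ⟨X, hX, hX2⟩ := h2
  obtain ⟨Y, hYX, hY, hYn, hYs⟩ := h1 X hX
  have hcard : Y.card = n := by
    by_contra hne
    obtain ⟨s, hs⟩ := hX2 Y hYX hY (by omega)
    have := hYs s
    tauto
  have key : ∀ y : S, ∃ b : S, y ∈ Y → (∀ z ∈ Y, z ≠ y → z ≤ b) ∧ ¬ y ≤ b := by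
    intro y
    by_cases hy : y ∈ Y
    swap
    · exact ⟨y, fun h => absurd h hy⟩
    have hc : (Y.erase y).card = n - 1 := by rw [Finset.card_erase_of_mem hy, hcard]
    have hne : (Y.erase y).Nonempty := by rw [← Finset.card_pos]; omega
    obtain ⟨b, hb⟩ := exists_isLUB_finset h _ hne
    refine ⟨b, fun _ => ⟨fun z hz hzy => hb.1 (by simp [hz, hzy]), fun hyb => ?_⟩⟩
    obtain ⟨s, hs⟩ := hX2 _ ((Finset.erase_subset y Y).trans hYX) hne hc.le
    have hub : upperBounds (↑Y : Set S) = upperBounds (↑(Y.erase y) : Set S) := by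
      rw [← Finset.insert_erase hy, Finset.coe_insert, upperBounds_insert,
        Finset.insert_erase hy, hb.upperBounds_eq]
      exact Set.inter_eq_right.2 (Set.Ici_subset_Ici.2 hyb)
    have h3 : IsLUB (↑Y : Set S) s ↔ IsLUB (↑(Y.erase y) : Set S) s := by
      rw [IsLUB, IsLUB, hub]
    have := hYs s
    tauto
  choose b hb using key
  exact ⟨Y, b, hcard, hb⟩

theorem mk_biUnion_finset_lt_s10 {A ι : Type*} {lam : Cardinal} (hlam : ℵ₀ ≤ lam)
    (G : ι → Set A) (hG : ∀ i, #(G i) < lam) (s : Finset ι) : #(⋃ i ∈ s, G i : Set A) < lam := by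
  classical
  induction s using Finset.induction_on with
  | empty => simpa using aleph0_pos.trans_le hlam
  | insert i s hi ih =>
    rw [Finset.set_biUnion_insert]
    exact (mk_union_le _ _).trans_lt (add_lt_of_lt hlam (hG i) ih)

/-- If `P` is a finite poset with zero such that each `P↓a` is a join-semilattice, and
the breadth of some `P↓a` equals `n ≥ 2`, then `(λ^{+(n-2)},<λ)⤳P` fails for every
infinite cardinal `λ`. -/
theorem stmt10 (P : Type v) [PartialOrder P] [Finite P] [OrderBot P]
    (hsemi : ∀ a : P, IsJoinSemilat ↥(Set.Iic a))
    (n : ℕ) (hn : 2 ≤ n) (a : P)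
    (hbr1 : BreadthLE ↥(Set.Iic a) n) (hbr2 : ¬ BreadthLE ↥(Set.Iic a) (n - 1)) :
    ∀ lam : Cardinal.{u}, ℵ₀ ≤ lam → ¬ Leadsto (succN lam (n - 2)) lam P := by
  classical
  intro lam hlam hlead
  obtain ⟨Y, b, hcard, hb⟩ := exists_irredundant (hsemi a) hn hbr1 hbr2
  obtain ⟨A, hcA⟩ : ∃ A : Type u, #A = succN lam (n - 2) := ⟨_, mk_out _⟩
  have hA : #(Set.univ : Set A) < succN lam (n - 1) := by
    have : n - 1 = (n - 2) + 1 := by omega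
    rw [mk_univ, hcA, this, succN, succN, Function.iterate_succ_apply']
    exact Order.lt_succ _
  obtain ⟨G, hG, hfree⟩ := exists_no_free_set lam (aleph0_pos.trans_le hlam) (n - 1) _ hA
  obtain ⟨f, hf, hF⟩ := hlead A hcA
    (fun X => if h : X.Finite then ⋃ Z ∈ h.toFinset.powerset, G Z else ∅) (by
      intro X
      split_ifs with h
      · exact mk_biUnion_finset_lt_s10 hlam G hG _
      · simpa using aleph0_pos.trans_le hlam)
  have hinj : Function.Injective fun y : Set.Iic a => f y := hf.comp Subtype.val_injective
  obtain ⟨x, hx, V, hVU, hxV, hxG⟩ := hfree (Y.image fun y : Set.Iic a => f y) (Set.subset_univ _)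
    (by rw [Finset.card_image_of_injective _ hinj]; omega)
  obtain ⟨y, hy, rfl⟩ := Finset.mem_image.1 hx
  obtain ⟨hb1, hb2⟩ := hb y hy
  have hfin : (f '' Set.Iic (b y : P)).Finite := Set.toFinite _
  have hV : V ⊆ hfin.toFinset := by
    intro z hz
    obtain ⟨w, hw, rfl⟩ := Finset.mem_image.1 (hVU hz)
    have hwy : w ≠ y := by
      rintro rfl
      exact hxV hz
    exact hfin.mem_toFinset.2 ⟨w, hb1 w hw hwy, rfl⟩
  have hmem : f y ∈ f '' Set.Iic (b y : P) := by
    refine hF (b y) a (b y).2 ⟨?_, ⟨y, y.2, rfl⟩⟩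
    rw [dif_pos hfin]
    exact Set.mem_biUnion (Finset.mem_coe.2 (Finset.mem_powerset.2 hV)) hxG
  obtain ⟨w, hw, hwy⟩ := hmem
  rw [hf hwy] at hw
  exact hb2 hw
end

section
/- Let r and m be integers with 1 ≤ r < m and let κ and λ be infinite cardinals. Then the following three statements are equivalent: (i) (κ,<λ)⤳B_m(≤r); (ii) for every map F : [κ]^{≤r} → [κ]^{<λ} there exists an m-element subset H of κ such that F(X) ∩ H ⊆ X for every X ∈ [H]^{≤r}; (iii) the relation (κ,r,λ)→m holds. -/
/-!
The three statements are linked by (i) → (ii) → (iii) → (ii) → (i).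

* (i) → (ii): apply (i) to `G X = ⋃ {F Y : Y ⊆ X, |Y| ≤ r}` (for finite `X`). The images `f {i}` of
  the `m` atoms of the truncated cube form the free set: a set `Y` of at most `r` of them is
  contained in `f '' Iic x`, where `x` is the set of the corresponding indices.
* (ii) → (i): as `κ` is infinite, there is a bijection `φ` from the finite subsets of `κ` to `κ`.
  Apply (ii) to `G X = ⋃ {φ⁻¹ a : a ∈ F (φ '' 𝒫 X)}` and send `x` to `φ {hᵢ : i ∈ x}`, where
  `H = {hᵢ : i < m}` is free for `G`.
* (iii) → (ii): apply (iii) to `F' X = ⋃ {F Y : Y ⊆ X}`. If `h ∈ H \ Y` with `|Y| ≤ r < m = |H|`,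
  then `Y` extends to an `r`-element subset of `H \ {h}`, so `h ∉ F Y`.
* (ii) → (iii) is a restriction.
-/

universe u v w

open Cardinal

/-- The truncated cube `B_m(≤r)`: all subsets `X` of `{0,…,m-1}` with `|X| ≤ r` or
`X = {0,…,m-1}`, ordered by inclusion. -/
abbrev TruncCube (m r : ℕ) : Type := {X : Finset (Fin m) // X.card ≤ r ∨ X = Finset.univ}

/-- The relation `(κ,r,λ)→ρ`: every set mapping `F : [κ]^r → [κ]^{<λ}` of order `r` has
a free set of cardinality `ρ`. -/
def ArrowFree (κ : Cardinal.{u}) (r : ℕ) (lam ρ : Cardinal.{u}) : Prop :=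
  ∀ A : Type u, #A = κ →
    ∀ F : Set A → Set A, (∀ X : Set A, #↥X = (r : Cardinal) → #↥(F X) < lam) →
      ∃ H : Set A, #↥H = ρ ∧
        ∀ X : Set A, X ⊆ H → #↥X = (r : Cardinal) → F X ∩ H ⊆ X

/-- A union of fewer than `lam` finite sets has size `< lam`, also when `lam = ℵ₀` or `lam` is
singular. -/
lemma mk_biUnion_finset_lt_s12 {A : Type u} {lam : Cardinal.{u}} (hlam : ℵ₀ ≤ lam) (S : Set A)
    (hS : #S < lam) (g : A → Finset A) : #↥(⋃ a ∈ S, (g a : Set A)) < lam := by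
  rcases hlam.eq_or_lt with rfl | h
  · rw [Cardinal.lt_aleph0_iff_set_finite] at hS ⊢
    exact hS.biUnion fun a _ => (g a).finite_toSet
  · refine (Cardinal.mk_biUnion_le _ _).trans_lt ?_
    refine Cardinal.mul_lt_of_lt hlam hS (lt_of_le_of_lt ?_ h)
    exact ciSup_le' fun a => (Cardinal.lt_aleph0_of_finite _).le

lemma mk_biUnion_lt_of_finite {A I : Type u} {lam : Cardinal.{u}} (hlam : ℵ₀ ≤ lam) {S : Set I}
    (hS : S.Finite) (g : I → Set A) (hg : ∀ i ∈ S, #↥(g i) < lam) :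
    #↥(⋃ i ∈ S, g i) < lam := by
  induction S, hS using Set.Finite.induction_on with
  | empty => simpa using Cardinal.aleph0_pos.trans_le hlam
  | @insert a s _ _ ih =>
    rw [Set.biUnion_insert]
    exact (Cardinal.mk_union_le _ _).trans_lt (Cardinal.add_lt_of_lt hlam (hg _ (by simp))
      (ih fun i hi => hg i (Set.mem_insert_of_mem _ hi)))

/-- The union of the values of `F` on the subsets of `X` of size at most `r`; it is empty when `X`
is infinite, which keeps it small. -/
def smallHull {A : Type u} (r : ℕ) (F : Set A → Set A) (X : Set A) : Set A :=
  ⋃ Y ∈ {Y : Set A | X.Finite ∧ Y ⊆ X ∧ #↥Y ≤ (r : Cardinal)}, F Y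

lemma mk_smallHull_lt {A : Type u} {r : ℕ} {lam : Cardinal.{u}} (hlam : ℵ₀ ≤ lam)
    {F : Set A → Set A} (hF : ∀ X : Set A, #↥X ≤ (r : Cardinal) → #↥(F X) < lam) (X : Set A) :
    #↥(smallHull r F X) < lam := by
  refine mk_biUnion_lt_of_finite hlam ?_ _ fun Y hY => hF Y hY.2.2
  by_cases hX : X.Finite
  · exact hX.finite_subsets.subset fun Y hY => hY.2.1
  · simp [hX]

lemma subset_smallHull {A : Type u} {r : ℕ} {F : Set A → Set A} {X Y : Set A} (hX : X.Finite)
    (hYX : Y ⊆ X) (hY : #↥Y ≤ (r : Cardinal)) : F Y ⊆ smallHull r F X :=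
  Set.subset_biUnion_of_mem (u := F) (x := Y) ⟨hX, hYX, hY⟩

lemma exists_finset_of_mk_le {A : Type u} {r : ℕ} {X : Set A} (h : #↥X ≤ (r : Cardinal)) :
    ∃ s : Finset A, (s : Set A) = X ∧ s.card ≤ r := by
  have hfin : X.Finite := Cardinal.lt_aleph0_iff_set_finite.1 (h.trans_lt Cardinal.natCast_lt_aleph0)
  lift X to Finset A using hfin
  exact ⟨X, rfl, by simpa using h⟩

/-- The images of the atoms of the truncated cube form a free set. -/
lemma free_of_leadsto {r m : ℕ} (hr : 1 ≤ r) {κ lam : Cardinal.{u}} (hlam : ℵ₀ ≤ lam)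
    (h : Leadsto κ lam (TruncCube m r)) (A : Type u) (hA : #A = κ) (F : Set A → Set A)
    (hF : ∀ X : Set A, #↥X ≤ (r : Cardinal) → #↥(F X) < lam) :
    ∃ H : Set A, #↥H = (m : Cardinal) ∧
      ∀ X : Set A, X ⊆ H → #↥X ≤ (r : Cardinal) → F X ∩ H ⊆ X := by
  classical
  obtain ⟨f, hf, hfree⟩ := h A hA (smallHull r F) (mk_smallHull_lt hlam hF)
  let atom : Fin m → TruncCube m r := fun i => ⟨{i}, Or.inl (by simpa using hr)⟩
  have hinj : Function.Injective (fun i => f (atom i)) := by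
    intro i j hij
    simpa [atom] using hf hij
  refine ⟨Set.range fun i => f (atom i), ?_, ?_⟩
  · have hcard := Cardinal.mk_range_eq_of_injective hinj
    rw [Cardinal.mk_fin, Cardinal.lift_natCast] at hcard
    simpa only [Cardinal.lift_uzero] using hcard
  · intro Y hYH hY
    obtain ⟨s, rfl, hs⟩ := exists_finset_of_mk_le hY
    -- `x` is the set of indices of the elements of `Y`
    let x : TruncCube m r := ⟨s.preimage (fun i => f (atom i)) hinj.injOn, Or.inl
      ((Finset.card_le_card_of_injOn _ (fun i hi => by simpa using hi) hinj.injOn).trans hs)⟩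
    have hsub : (s : Set A) ⊆ f '' Set.Iic x := by
      intro a ha
      obtain ⟨i, rfl⟩ := hYH ha
      refine ⟨atom i, ?_, rfl⟩
      change ({i} : Finset (Fin m)) ⊆ s.preimage _ hinj.injOn
      rw [Finset.singleton_subset_iff, Finset.mem_preimage]
      exact ha
    rintro a ⟨haF, i, rfl⟩
    have htop : ∀ y : TruncCube m r, y ≤ ⟨Finset.univ, Or.inr rfl⟩ :=
      fun y => Finset.subset_univ y.1
    obtain ⟨y, hy, hyi⟩ := hfree x _ (htop x)
      ⟨subset_smallHull (Set.toFinite _) hsub hY haF, atom i, htop _, rfl⟩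
    have hyx : ({i} : Finset (Fin m)) ⊆ x.1 := by
      have := hf hyi
      subst this
      exact hy
    simpa [x] using hyx

/-- Coding finite subsets of an infinite set by its elements turns a free `m`-element set into an
embedding of the truncated cube. -/
lemma leadsto_of_free {r m : ℕ} {κ lam : Cardinal.{u}} (hκ : ℵ₀ ≤ κ) (hlam : ℵ₀ ≤ lam)
    (h : ∀ A : Type u, #A = κ →
      ∀ F : Set A → Set A, (∀ X : Set A, #↥X ≤ (r : Cardinal) → #↥(F X) < lam) →
        ∃ H : Set A, #↥H = (m : Cardinal) ∧
          ∀ X : Set A, X ⊆ H → #↥X ≤ (r : Cardinal) → F X ∩ H ⊆ X) :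
    Leadsto κ lam (TruncCube m r) := by
  classical
  intro A hA F hF
  have : Infinite A := Cardinal.infinite_iff.2 (hA ▸ hκ)
  obtain ⟨φ⟩ : Nonempty (Finset A ≃ A) := Cardinal.eq.1 (Cardinal.mk_finset_of_infinite A)
  obtain ⟨H, hH, hfree⟩ := h A hA
    (fun X => ⋃ a ∈ F (φ '' {s : Finset A | (s : Set A) ⊆ X}), (φ.symm a : Set A))
    (fun X _ => mk_biUnion_finset_lt_s12 hlam _ (hF _) _)
  obtain ⟨e⟩ : Nonempty (Fin m ≃ H) := by
    rw [← Cardinal.lift_mk_eq']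
    simp [hH]
  let ι : Fin m ↪ A := e.toEmbedding.trans (Function.Embedding.subtype _)
  have hι : ∀ i, ι i ∈ H := fun i => (e i).2
  refine ⟨fun x => φ (x.1.map ι), fun x y hxy => ?_, fun x y hxy => ?_⟩
  · exact Subtype.ext (Finset.map_injective ι (φ.injective hxy))
  · rcases x.2 with hx | hx
    · have himg : (fun x : TruncCube m r => φ (x.1.map ι)) '' Set.Iic x
          = φ '' {s : Finset A | (s : Set A) ⊆ (x.1.map ι : Finset A)} := by
        ext a
        constructor
        · rintro ⟨y, hy, rfl⟩
          exact ⟨_, Finset.coe_subset.2 (Finset.map_subset_map.2 hy), rfl⟩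
        · rintro ⟨s, hs, rfl⟩
          obtain ⟨u, hu, rfl⟩ := Finset.subset_map_iff.1 (Finset.coe_subset.1 hs)
          exact ⟨⟨u, Or.inl ((Finset.card_le_card hu).trans hx)⟩, hu, rfl⟩
      rintro _ ⟨haF, z, -, rfl⟩
      refine ⟨z, ?_, rfl⟩
      have key := hfree (x.1.map ι : Finset A) (by
        intro a ha
        obtain ⟨i, -, rfl⟩ := Finset.mem_map.1 (Finset.mem_coe.1 ha)
        exact hι i) (by
        refine (Cardinal.mk_coe_finset (s := x.1.map ι)).le.trans ?_
        rw [Finset.card_map]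
        exact_mod_cast hx)
      change z.1 ⊆ x.1
      intro i hi
      rw [himg] at haF
      have hmem := key ⟨Set.mem_biUnion haF (by simpa using hi), hι i⟩
      simpa using hmem
    -- here `x` is the top element, so the image of `Iic x` is the whole range
    · rintro _ ⟨-, z, -, rfl⟩
      exact ⟨z, (by change z.1 ⊆ x.1; rw [hx]; exact Finset.subset_univ _), rfl⟩

lemma free_of_arrowFree {r m : ℕ} (hrm : r < m) {κ lam : Cardinal.{u}} (hlam : ℵ₀ ≤ lam)
    (h : ArrowFree κ r lam (m : Cardinal)) (A : Type u) (hA : #A = κ) (F : Set A → Set A)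
    (hF : ∀ X : Set A, #↥X ≤ (r : Cardinal) → #↥(F X) < lam) :
    ∃ H : Set A, #↥H = (m : Cardinal) ∧
      ∀ X : Set A, X ⊆ H → #↥X ≤ (r : Cardinal) → F X ∩ H ⊆ X := by
  classical
  obtain ⟨H, hH, hfree⟩ := h A hA (smallHull r F) fun X _ => mk_smallHull_lt hlam hF X
  refine ⟨H, hH, ?_⟩
  rintro Y hYH hY a ⟨haF, haH⟩
  by_contra haY
  obtain ⟨s, rfl, hs⟩ := exists_finset_of_mk_le hY
  obtain ⟨t, rfl, -⟩ := exists_finset_of_mk_le hH.le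
  have ht : t.card = m := by simpa using hH
  have hst : s ⊆ t.erase a := Finset.subset_erase.2 ⟨Finset.coe_subset.1 hYH, by simpa using haY⟩
  obtain ⟨w, hsw, hwt, hw⟩ := Finset.exists_subsuperset_card_eq hst hs
    (by rw [Finset.card_erase_of_mem (by simpa using haH)]; omega)
  have haw := hfree w (Finset.coe_subset.2 (hwt.trans (Finset.erase_subset _ _))) (by simp [hw])
    ⟨subset_smallHull w.finite_toSet (Finset.coe_subset.2 hsw) hY haF, haH⟩
  exact Finset.notMem_erase a t (hwt haw)

lemma arrowFree_of_free {r m : ℕ} {κ lam : Cardinal.{u}} (hlam : ℵ₀ ≤ lam)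
    (h : ∀ A : Type u, #A = κ →
      ∀ F : Set A → Set A, (∀ X : Set A, #↥X ≤ (r : Cardinal) → #↥(F X) < lam) →
        ∃ H : Set A, #↥H = (m : Cardinal) ∧
          ∀ X : Set A, X ⊆ H → #↥X ≤ (r : Cardinal) → F X ∩ H ⊆ X) :
    ArrowFree κ r lam (m : Cardinal) := by
  classical
  intro A hA F hF
  obtain ⟨H, hH, hfree⟩ := h A hA (fun X => if #↥X = (r : Cardinal) then F X else ∅) (by
    intro X _
    split_ifs with hX
    · exact hF X hX
    · simpa using Cardinal.aleph0_pos.trans_le hlam)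
  refine ⟨H, hH, fun X hXH hX => ?_⟩
  simpa only [if_pos hX] using hfree X hXH hX.le

/-- For `1 ≤ r < m` and infinite cardinals `κ`, `λ`, the following are equivalent:
(i) `(κ,<λ)⤳B_m(≤r)`; (ii) every `F : [κ]^{≤r} → [κ]^{<λ}` has an `m`-element free set;
(iii) `(κ,r,λ)→m`. -/
theorem stmt12 (r m : ℕ) (hr : 1 ≤ r) (hrm : r < m)
    (κ lam : Cardinal.{u}) (hκ : ℵ₀ ≤ κ) (hlam : ℵ₀ ≤ lam) :
    (Leadsto κ lam (TruncCube m r) ↔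
      (∀ A : Type u, #A = κ →
        ∀ F : Set A → Set A, (∀ X : Set A, #↥X ≤ (r : Cardinal) → #↥(F X) < lam) →
          ∃ H : Set A, #↥H = (m : Cardinal) ∧
            ∀ X : Set A, X ⊆ H → #↥X ≤ (r : Cardinal) → F X ∩ H ⊆ X)) ∧
    (Leadsto κ lam (TruncCube m r) ↔ ArrowFree κ r lam (m : Cardinal)) :=
  ⟨⟨free_of_leadsto hr hlam, leadsto_of_free hκ hlam⟩,
    ⟨fun h => arrowFree_of_free hlam (free_of_leadsto hr hlam h),
      fun h => leadsto_of_free hκ hlam (free_of_arrowFree hrm hlam h)⟩⟩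
end
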